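/- arXiv:math/9811142 — 3 statements merged into one kernel-verified Lean document; each statement's English description precedes it below -/
import Mathlib

section
/- Fix a, b > 0 and let v = ab/(a + b) be the classical reduced mass. For k > max(2v, 0) let v_f(k) = ab/(a + b − 2ab/k) be the deformed reduced mass. Then k·(v_f(k) − v) tends to 2v² as k tends to +∞; equivalently, v_f = v·(1 + 2v/k + o(1/k)), which yields the first-order correction E_n = −(v e⁴ / 2ℏ²n²)(1 + 2v/k + …) to the Bohr energy levels of the k-deformed hydrogen atom. -/
/-! In the variable `κ = 1/k` the deformed reduced mass `v_f` has an affine inverse,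
`1/v_f = 1/a + 1/b - 2κ`, so it satisfies the Riccati equation `dv_f/dκ = 2 v_f²`. Since `v_f = v`
at `κ = 0`, the quantity `k (v_f(k) - v)` is a difference quotient of `v_f` at `κ = 0` with step
`1/k`, and its limit is the derivative `2v²`. -/

open Filter Bornology Topology

/-- The deformed reduced mass `v_f` of two particles of masses `a` and `b`, as a function of the
inverse `κ = 1/k` of the deformation parameter, so that `κ = 0` is the undeformed case. -/
def deformedReducedMass {K : Type*} [Field K] (a b κ : K) : K :=
  a * b / (a + b - 2 * a * b * κ)

section

variable {𝕜 : Type*} [NontriviallyNormedField 𝕜]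

theorem tendsto_smul_sub_cobounded_of_hasDerivAt {F : Type*} [NormedAddCommGroup F]
    [NormedSpace 𝕜 F] {f : 𝕜 → F} {f' : F} {x : 𝕜} (hf : HasDerivAt f f' x) :
    Tendsto (fun k : 𝕜 => k • (f (x + k⁻¹) - f x)) (cobounded 𝕜) (𝓝 f') := by
  simpa only [Function.comp_def, inv_inv] using
    hf.tendsto_slope_zero.comp tendsto_inv₀_cobounded'

theorem hasDerivAt_deformedReducedMass {a b κ : 𝕜} (hM : a + b - 2 * a * b * κ ≠ 0) :
    HasDerivAt (deformedReducedMass a b) (2 * deformedReducedMass a b κ ^ 2) κ := by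
  have hasDerivAt_mass :
      HasDerivAt (fun t => a + b - 2 * a * b * t) (-(2 * a * b)) κ := by
    simpa using ((hasDerivAt_id κ).const_mul (2 * a * b)).const_sub (a + b)
  refine ((hasDerivAt_const κ (a * b)).fun_div hasDerivAt_mass hM).congr_deriv ?_
  rw [deformedReducedMass, div_pow]
  ring

theorem reduced_mass_first_order_correction_general {a b : 𝕜} (hab : a + b ≠ 0) :
    Tendsto (fun k : 𝕜 => k * (a * b / (a + b - 2 * a * b / k) - a * b / (a + b)))
      (cobounded 𝕜) (𝓝 (2 * (a * b / (a + b)) ^ 2)) := by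
  have hasDerivAt_zero :
      HasDerivAt (deformedReducedMass a b) (2 * deformedReducedMass a b 0 ^ 2) 0 :=
    hasDerivAt_deformedReducedMass (by simpa using hab)
  simpa only [deformedReducedMass, smul_eq_mul, zero_add, mul_zero, sub_zero, ← div_eq_mul_inv]
    using tendsto_smul_sub_cobounded_of_hasDerivAt hasDerivAt_zero

end

/-- First-order correction to the reduced mass: `k (v_f(k) - v) → 2v²` as `k → ∞`,
i.e. `v_f = v (1 + 2v/k + o(1/k))`, yielding the correction to the Bohr levels. -/
theorem reduced_mass_first_order_correction (a b : ℝ) (ha : 0 < a) (hb : 0 < b) :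
    Filter.Tendsto
      (fun k : ℝ => k * (a * b / (a + b - 2 * a * b / k) - a * b / (a + b)))
      Filter.atTop (nhds (2 * (a * b / (a + b)) ^ 2)) :=
  (reduced_mass_first_order_correction_general (add_pos ha hb).ne').mono_left
    IsOrderBornology.atTop_le_cobounded
end

section
/- Let k > 0, let a, b satisfy 0 < a < k/2 and 0 < b < k/2, set M = a + b − 2ab/k, λ = √(1 − 2b/k), and v = ab/M. Then for all vectors p, p′ in Euclidean space ℝ³: ‖p‖²/(2a) + ‖p′‖²/(2b) = ‖λ·p + p′‖²/(2M) + ‖(b/M)·p − (aλ/M)·p′‖²/(2v). (The total kinetic energy of two free particles decomposes exactly into center-of-mass kinetic energy ‖P‖²/(2M) with total momentum P = λp + p′ and relative kinetic energy ‖Π‖²/(2v) with relative momentum Π = (b·p − aλ·p′)/M.) -/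
/-!
Writing the deformed total mass as `M = a λ² + b` removes `k` from the problem. What remains is a
weighted Lagrange identity: the cross terms `⟪p, p'⟫` of `a b ‖λ p + p'‖²` and `‖b p - a λ p'‖²`
cancel, and the rest factors as `M (b ‖p‖² + a ‖p'‖²)`. Dividing by `2 a b M` gives the energies.
-/

section InnerProductSpace

variable {E : Type*} [NormedAddCommGroup E] [InnerProductSpace ℝ E]

theorem mul_norm_smul_add_smul_sq_add_norm_smul_sub_smul_sq (a b s t : ℝ) (x y : E) :
    a * b * ‖s • x + t • y‖ ^ 2 + ‖(b * t) • x - (a * s) • y‖ ^ 2 =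
      (a * s ^ 2 + b * t ^ 2) * (b * ‖x‖ ^ 2 + a * ‖y‖ ^ 2) := by
  rw [norm_add_sq_real, norm_sub_sq_real]
  simp only [norm_smul, real_inner_smul_left, real_inner_smul_right, mul_pow, Real.norm_eq_abs,
    sq_abs]
  ring

theorem kinetic_energy_decomposition_general {a b lam M v : ℝ} (ha : a ≠ 0) (hb : b ≠ 0)
    (hM₀ : M ≠ 0) (hM : M = a * lam ^ 2 + b) (hv : v = a * b / M) (p p' : E) :
    ‖p‖ ^ 2 / (2 * a) + ‖p'‖ ^ 2 / (2 * b) =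
      ‖lam • p + p'‖ ^ 2 / (2 * M) +
        ‖(b / M) • p - (a * lam / M) • p'‖ ^ 2 / (2 * v) := by
  have lagrange : a * b * ‖lam • p + p'‖ ^ 2 + ‖b • p - (a * lam) • p'‖ ^ 2 =
      M * (b * ‖p‖ ^ 2 + a * ‖p'‖ ^ 2) := by
    simpa only [one_smul, mul_one, one_pow, ← hM] using
      mul_norm_smul_add_smul_sq_add_norm_smul_sub_smul_sq a b lam 1 p p'
  have relative_momentum : ‖(b / M) • p - (a * lam / M) • p'‖ ^ 2 =
      ‖b • p - (a * lam) • p'‖ ^ 2 / M ^ 2 := by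
    rw [div_eq_inv_mul b, div_eq_inv_mul (a * lam), mul_smul, mul_smul, ← smul_sub, norm_smul,
      mul_pow, Real.norm_eq_abs, sq_abs, inv_pow, inv_mul_eq_div]
  calc ‖p‖ ^ 2 / (2 * a) + ‖p'‖ ^ 2 / (2 * b)
      = M * (b * ‖p‖ ^ 2 + a * ‖p'‖ ^ 2) / (2 * a * b * M) := by field_simp
    _ = (a * b * ‖lam • p + p'‖ ^ 2 + ‖b • p - (a * lam) • p'‖ ^ 2) / (2 * a * b * M) := by
      rw [lagrange]
    _ = ‖lam • p + p'‖ ^ 2 / (2 * M) +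
        ‖(b / M) • p - (a * lam / M) • p'‖ ^ 2 / (2 * v) := by
      rw [relative_momentum, hv]
      field_simp

end InnerProductSpace

theorem deformed_total_mass_eq_mul_sqrt_sq_add {b k : ℝ} (a : ℝ) (h : 2 * b / k ≤ 1) :
    a + b - 2 * a * b / k = a * √(1 - 2 * b / k) ^ 2 + b := by
  rw [Real.sq_sqrt (sub_nonneg.mpr h)]
  ring

/-- Exact decomposition of the two-particle kinetic energy into center-of-mass and
relative parts, for the variables built from the direct coproduct (eqs. (15)-(16)):
total momentum `P = λ p + p'`, relative momentum `Π = (b p - a λ p')/M`, where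
`M = a + b - 2ab/k`, `λ = √(1 - 2b/k)`, `v = ab/M`. -/
theorem kinetic_energy_decomposition (k : ℝ) (hk : 0 < k) (a b : ℝ)
    (ha₀ : 0 < a) (ha : a < k / 2) (hb₀ : 0 < b) (hb : b < k / 2)
    (M lam v : ℝ) (hM : M = a + b - 2 * a * b / k)
    (hlam : lam = Real.sqrt (1 - 2 * b / k)) (hv : v = a * b / M)
    (p p' : EuclideanSpace ℝ (Fin 3)) :
    ‖p‖ ^ 2 / (2 * a) + ‖p'‖ ^ 2 / (2 * b) =
      ‖lam • p + p'‖ ^ 2 / (2 * M) +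
        ‖(b / M) • p - (a * lam / M) • p'‖ ^ 2 / (2 * v) := by
  have hM' : M = a * lam ^ 2 + b := by
    rw [hM, hlam, deformed_total_mass_eq_mul_sqrt_sq_add a ((div_le_one hk).mpr (by linarith))]
  exact kinetic_energy_decomposition_general ha₀.ne' hb₀.ne' (by rw [hM']; positivity) hM' hv p p'
end

section
/- Let k > 0, let a, b satisfy 0 < a < k/2 and 0 < b < k/2, set M = a + b − 2ab/k, μ = √(1 − 2a/k), and v = ab/M. Then for all vectors p, p′ in Euclidean space ℝ³: ‖p‖²/(2a) + ‖p′‖²/(2b) = ‖p + μ·p′‖²/(2M) + ‖(bμ/M)·p − (a/M)·p′‖²/(2v). (The same kinetic-energy decomposition holds for the dynamical variables built from the transposed coproduct, eq. (22), with total momentum P̃ = p + μp′ and relative momentum Π̃ = (bμ·p − a·p′)/M.) -/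
/-!
The square root enters only through `μ² = 1 - 2a/k`, which turns the deformed total mass into
`M = a + b μ²`. With this mass the cross terms `⟪p, p'⟫` of `a b ‖P̃‖²` and `‖M Π̃‖²` cancel, and
their sum is `M (b ‖p‖² + a ‖p'‖²)`; dividing by `2 a b M` gives the decomposition.
-/

section InnerProductSpace

variable {E : Type*} [NormedAddCommGroup E] [InnerProductSpace ℝ E]

theorem norm_smul_add_smul_sq_real (s t : ℝ) (x y : E) :
    ‖s • x + t • y‖ ^ 2 = s ^ 2 * ‖x‖ ^ 2 + 2 * (s * t) * inner ℝ x y + t ^ 2 * ‖y‖ ^ 2 := by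
  rw [norm_add_sq_real, real_inner_smul_left, real_inner_smul_right, norm_smul, norm_smul,
    mul_pow, mul_pow, Real.norm_eq_abs, Real.norm_eq_abs, sq_abs, sq_abs]
  ring

theorem norm_div_smul_sub_div_smul_sq (s t M : ℝ) (x y : E) :
    ‖(s / M) • x - (t / M) • y‖ ^ 2 = ‖s • x - t • y‖ ^ 2 / M ^ 2 := by
  have factor_inv : (s / M) • x - (t / M) • y = M⁻¹ • (s • x - t • y) := by
    rw [smul_sub, smul_smul, smul_smul, div_eq_inv_mul, div_eq_inv_mul]
  rw [factor_inv, norm_smul, mul_pow, Real.norm_eq_abs, sq_abs, inv_pow, inv_mul_eq_div]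

theorem kinetic_energy_decomposition_of_mass_eq {a b s t M : ℝ} (ha : a ≠ 0) (hb : b ≠ 0)
    (hM₀ : M ≠ 0) (hM : M = a * s ^ 2 + b * t ^ 2) (p p' : E) :
    ‖p‖ ^ 2 / (2 * a) + ‖p'‖ ^ 2 / (2 * b) =
      ‖s • p + t • p'‖ ^ 2 / (2 * M) +
        ‖(b * t / M) • p - (a * s / M) • p'‖ ^ 2 / (2 * (a * b / M)) := by
  calc ‖p‖ ^ 2 / (2 * a) + ‖p'‖ ^ 2 / (2 * b)
      = M * (b * ‖p‖ ^ 2 + a * ‖p'‖ ^ 2) / (2 * a * b * M) := by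
        field_simp
    _ = (a * b * ‖s • p + t • p'‖ ^ 2 + ‖(b * t) • p - (a * s) • p'‖ ^ 2) /
          (2 * a * b * M) := by
        rw [mul_norm_smul_add_smul_sq_add_norm_smul_sub_smul_sq, ← hM]
    _ = ‖s • p + t • p'‖ ^ 2 / (2 * M) +
          ‖(b * t / M) • p - (a * s / M) • p'‖ ^ 2 / (2 * (a * b / M)) := by
        rw [norm_div_smul_sub_div_smul_sq]
        field_simp

theorem deformed_mass_eq_add_mul_sqrt_sq {k a : ℝ} (hk : 0 < k) (ha : a ≤ k / 2) (b : ℝ) :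
    a + b - 2 * a * b / k = a + b * √(1 - 2 * a / k) ^ 2 := by
  have two_mul_div_le_one : 2 * a / k ≤ 1 := (div_le_one hk).2 (by linarith)
  rw [Real.sq_sqrt (sub_nonneg.2 two_mul_div_le_one)]
  ring

theorem kinetic_energy_decomposition_transposed_general {k a b M mu v : ℝ} (hk : 0 < k)
    (ha₀ : a ≠ 0) (ha : a ≤ k / 2) (hb₀ : b ≠ 0) (hM₀ : M ≠ 0)
    (hM : M = a + b - 2 * a * b / k) (hmu : mu = √(1 - 2 * a / k)) (hv : v = a * b / M)
    (p p' : E) :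
    ‖p‖ ^ 2 / (2 * a) + ‖p'‖ ^ 2 / (2 * b) =
      ‖p + mu • p'‖ ^ 2 / (2 * M) +
        ‖(b * mu / M) • p - (a / M) • p'‖ ^ 2 / (2 * v) := by
  have mass_eq : M = a * 1 ^ 2 + b * mu ^ 2 := by
    rw [hM, hmu, one_pow, mul_one, deformed_mass_eq_add_mul_sqrt_sq hk ha]
  simpa only [one_smul, mul_one, hv] using
    kinetic_energy_decomposition_of_mass_eq ha₀ hb₀ hM₀ mass_eq p p'

end InnerProductSpace

/-- Exact decomposition of the two-particle kinetic energy into center-of-mass and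
relative parts, for the variables built from the transposed coproduct (eq. (22)):
total momentum `P̃ = p + μ p'`, relative momentum `Π̃ = (b μ p - a p')/M`, where
`M = a + b - 2ab/k`, `μ = √(1 - 2a/k)`, `v = ab/M`. -/
theorem kinetic_energy_decomposition_transposed (k : ℝ) (hk : 0 < k) (a b : ℝ)
    (ha₀ : 0 < a) (ha : a < k / 2) (hb₀ : 0 < b) (hb : b < k / 2)
    (M mu v : ℝ) (hM : M = a + b - 2 * a * b / k)
    (hmu : mu = Real.sqrt (1 - 2 * a / k)) (hv : v = a * b / M)
    (p p' : EuclideanSpace ℝ (Fin 3)) :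
    ‖p‖ ^ 2 / (2 * a) + ‖p'‖ ^ 2 / (2 * b) =
      ‖p + mu • p'‖ ^ 2 / (2 * M) +
        ‖(b * mu / M) • p - (a / M) • p'‖ ^ 2 / (2 * v) := by
  have mass_ne_zero : M ≠ 0 := by
    rw [hM, deformed_mass_eq_add_mul_sqrt_sq hk ha.le]
    positivity
  exact kinetic_energy_decomposition_transposed_general hk ha₀.ne' ha.le hb₀.ne' mass_ne_zero
    hM hmu hv p p'
end
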